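/- Let n ≥ 2, let V be any type, Ψ a subset of V, and φ a binary predicate on ℕ∞ × V. Suppose α_1, …, α_n ∈ ℕ∞ satisfy α_i ∨ α_j = 1 for all 1 ≤ i ≠ j ≤ n. If for every i with α_i = 1 there exists v ∈ Ψ with φ(α_i, v), then for every i ∈ {1, …, n} there exists v ∈ Ψ such that α_i = 1 implies φ(α_i, v). (This is the instance IP_{F_n, Ψ} of independence of premisses, which follows from LLPO_n.) -/

import Mathlib

/-- `ℕ∞`: decreasing binary sequences `ℕ → {0,1}`. -/
def DecSeq (α : ℕ → ℕ) : Prop := (∀ i, α i ≤ 1) ∧ ∀ i j, i ≤ j → α j ≤ α i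

/-!
Two antitone sequences whose join is constantly `c` cannot both drop below `c`, since at any later
index their join would be below `c` too. Hence at most one of the premisses `αᵢ = c` fails, and as
there are at least two of them, some premiss holds and supplies an element of `Ψ`. Any element of
`Ψ` serves for an index whose premiss fails.
-/

theorem eq_const_or_eq_const_of_max_eq {K L : Type*} [Preorder K] [IsDirectedOrder K]
    [LinearOrder L] {a b : K → L} {c : L} (ha : Antitone a) (hb : Antitone b)
    (hab : ∀ k, max (a k) (b k) = c) :
    a = (fun _ => c) ∨ b = (fun _ => c) := by
  have ha_le (k : K) : a k ≤ c := (le_max_left _ _).trans_eq (hab k)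
  have hb_le (k : K) : b k ≤ c := (le_max_right _ _).trans_eq (hab k)
  by_contra! ⟨ha_ne, hb_ne⟩
  obtain ⟨k, hk⟩ := Function.ne_iff.mp ha_ne
  obtain ⟨m, hm⟩ := Function.ne_iff.mp hb_ne
  obtain ⟨l, hkl, hml⟩ := exists_ge_ge k m
  have ha_lt : a l < c := (ha hkl).trans_lt ((ha_le k).lt_of_ne hk)
  have hb_lt : b l < c := (hb hml).trans_lt ((hb_le m).lt_of_ne hm)
  exact (max_lt ha_lt hb_lt).ne (hab l)

theorem exists_mem_imp_of_pairwise_or {ι V : Type*} [Nontrivial ι] {Ψ : Set V} {p : ι → Prop}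
    {q : ι → V → Prop} (hp : Pairwise fun i j => p i ∨ p j)
    (h : ∀ i, p i → ∃ v ∈ Ψ, q i v) (i : ι) :
    ∃ v ∈ Ψ, p i → q i v := by
  by_cases hi : p i
  · obtain ⟨v, hv, hq⟩ := h i hi
    exact ⟨v, hv, fun _ => hq⟩
  · obtain ⟨j, hji⟩ := exists_ne i
    obtain ⟨v, hv, -⟩ := h j ((hp hji).resolve_right hi)
    exact ⟨v, hv, fun hi' => absurd hi' hi⟩

theorem ip_Fn_Psi_general {ι K L V : Type*} [Nontrivial ι] [Preorder K] [IsDirectedOrder K]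
    [LinearOrder L] {c : L} {Ψ : Set V} {φ : (K → L) → V → Prop} {α : ι → K → L}
    (hα : ∀ i, Antitone (α i)) (hjoin : ∀ i j, i ≠ j → ∀ k, max (α i k) (α j k) = c)
    (h : ∀ i, α i = (fun _ => c) → ∃ v ∈ Ψ, φ (α i) v) :
    ∀ i, ∃ v ∈ Ψ, (α i = (fun _ => c) → φ (α i) v) :=
  exists_mem_imp_of_pairwise_or
    (fun i j hij => eq_const_or_eq_const_of_max_eq (hα i) (hα j) (hjoin i j hij)) h

/-- The instance `IP_{F_n, Ψ}` of independence of premisses (a consequence of `LLPO_n`). -/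
theorem ip_Fn_Psi (n : ℕ) (hn : 2 ≤ n) (V : Type*) (Ψ : Set V)
    (φ : (ℕ → ℕ) → V → Prop)
    (αs : Fin n → (ℕ → ℕ)) (hdec : ∀ i, DecSeq (αs i))
    (hjoin : ∀ i j, i ≠ j → ∀ k, max (αs i k) (αs j k) = 1)
    (h : ∀ i, αs i = (fun _ => 1) → ∃ v ∈ Ψ, φ (αs i) v) :
    ∀ i, ∃ v ∈ Ψ, (αs i = (fun _ => 1) → φ (αs i) v) := by
  have : Nontrivial (Fin n) := Fin.nontrivial_iff_two_le.mpr hn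
  exact ip_Fn_Psi_general (fun i => (hdec i).2) hjoin h
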